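/- There exists a Cantor subset C of [0,1] such that the group of homeomorphisms of C induced by restrictions of C^∞ diffeomorphisms of ℝ preserving C is uncountable; explicitly, the group of bounded integer sequences under termwise addition embeds into this group. -/

import Mathlib

open Set Filter Topology Asymptotics

/-- A Cantor subset of the reals: nonempty, compact, perfect, totally disconnected. -/
def IsCantorSet (C : Set ℝ) : Prop :=
  C.Nonempty ∧ IsCompact C ∧ Perfect C ∧ IsTotallyDisconnected C

/-- `C` is `σ`-sparse: any two points of `C` bound a complementary open interval of
relative length at least `σ`. -/
def SparseSet (σ : ℝ) (C : Set ℝ) : Prop :=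
  ∀ a ∈ C, ∀ b ∈ C, a < b →
    ∃ α β : ℝ, a ≤ α ∧ α < β ∧ β ≤ b ∧ Set.Ioo α β ∩ C = ∅ ∧ σ * (b - a) ≤ β - α

/-- `φ` is a `C¹` diffeomorphism of `ℝ` with inverse `ψ`. -/
def IsC1DiffeoPair (φ ψ : ℝ → ℝ) : Prop :=
  ContDiff ℝ 1 φ ∧ ContDiff ℝ 1 ψ ∧ Function.LeftInverse ψ φ ∧ Function.RightInverse ψ φ


/-- A `C^∞` diffeomorphism pair of ℝ. -/
def IsSmoothDiffeoPair (φ ψ : ℝ → ℝ) : Prop :=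
  ContDiff ℝ (⊤ : ℕ∞) φ ∧ ContDiff ℝ (⊤ : ℕ∞) ψ ∧ Function.LeftInverse ψ φ ∧ Function.RightInverse ψ φ

/-- A bounded integer sequence. -/
def BoundedSeq (m : ℕ → ℤ) : Prop := ∃ B : ℤ, ∀ i, |m i| ≤ B

/-!
On pairwise disjoint intervals `(a (j + 1), a j)` accumulating at `0` place bump functions `f j`,
scaled so that the derivatives of `f j` up to order `j + 1` are bounded by a small summable
sequence. Then for every `S ⊆ ℕ` the map `x ↦ x + ∑ j ∈ S, f j x` is a smooth diffeomorphism of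
`ℝ`: it is `g = id + ∑ j, f j` with some of the bumps switched off. A bounded integer sequence is a
finite sum of sequences `± 1_S`, so the infinite composition `Θ(m) = g₁^{m₁} ∘ g₂^{m₂} ∘ ⋯`, which
is `g ^ m j` on the `j`-th interval, is a finite composition of such diffeomorphisms and inverses.

The Cantor set is the closure of the union of the `g`-orbits of compact perfect sets
`K j ⊆ (a (j + 1), a j)`. Orbits escape to the endpoints, so the images `g ^ k '' K j` are locally
finite inside the intervals and their union is locally closed. All but countably many points have
an orbit avoiding `ℚ`; with the `K j` made of such points this union, hence its closure, is nowhere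
dense.
-/

section Topology

variable {X : Type*} [TopologicalSpace X]

lemma preperfect_iUnion {ι : Type*} {s : ι → Set X} (hs : ∀ i, Preperfect (s i)) :
    Preperfect (⋃ i, s i) := by
  intro x hx
  obtain ⟨i, hi⟩ := mem_iUnion.1 hx
  exact (hs i x hi).mono (Filter.principal_mono.2 (subset_iUnion s i))

lemma preperfect_image_homeomorph {Y : Type*} [TopologicalSpace Y] (e : X ≃ₜ Y) {s : Set X}
    (hs : Preperfect s) : Preperfect (e '' s) := by
  rintro _ ⟨x, hx, rfl⟩
  simpa using (hs x hx).map e.continuous.continuousAt e.injective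

lemma isLocallyClosed_iUnion_of_finite_nhds {ι : Type*} {s : ι → Set X} {U : Set X}
    (hU : IsOpen U) (hsU : ∀ i, s i ⊆ U) (hs : ∀ i, IsClosed (s i))
    (hfin : ∀ x ∈ U, ∃ V ∈ 𝓝 x, {i | (s i ∩ V).Nonempty}.Finite) :
    IsLocallyClosed (⋃ i, s i) := by
  refine ⟨U, closure (⋃ i, s i), hU, isClosed_closure,
    (subset_inter (iUnion_subset hsU) subset_closure).antisymm ?_⟩
  rintro x ⟨hxU, hx⟩
  obtain ⟨V, hV, hfin⟩ := hfin x hxU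
  have hclosed : IsClosed (⋃ i ∈ {i | (s i ∩ V).Nonempty}, s i) :=
    hfin.isClosed_biUnion fun i _ ↦ hs i
  have hsub : V ∩ ⋃ i, s i ⊆ ⋃ i ∈ {i | (s i ∩ V).Nonempty}, s i := by
    rintro y ⟨hyV, hy⟩
    obtain ⟨i, hi⟩ := mem_iUnion.1 hy
    exact mem_biUnion (show i ∈ {i | (s i ∩ V).Nonempty} from ⟨y, hi, hyV⟩) hi
  have hxV : x ∈ closure (V ∩ ⋃ i, s i) := by
    rw [mem_closure_iff_nhds] at hx ⊢
    intro W hW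
    simpa only [inter_assoc] using hx (W ∩ V) (inter_mem hW hV)
  exact iUnion₂_subset_iUnion _ _ (closure_minimal hsub hclosed hxV)

lemma isNowhereDense_of_isLocallyClosed {s : Set X} (hs : IsLocallyClosed s)
    (hd : Dense sᶜ) : IsNowhereDense s := by
  by_contra hne
  obtain ⟨U, Z, hU, hZ, rfl⟩ := hs
  obtain ⟨x, hx⟩ := nonempty_iff_ne_empty.2 hne
  obtain ⟨y, hy, hyU, -⟩ := mem_closure_iff.1 (interior_subset hx) _ isOpen_interior hx
  obtain ⟨z, ⟨hz, hzU⟩, hzs⟩ :=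
    hd.inter_open_nonempty _ (isOpen_interior.inter hU) ⟨y, hy, hyU⟩
  exact hzs ⟨hzU, closure_minimal inter_subset_right hZ (interior_subset hz)⟩

lemma isTotallyDisconnected_of_interior_eq_empty [LinearOrder X] [OrderTopology X]
    [DenselyOrdered X] {s : Set X} (hs : interior s = ∅) : IsTotallyDisconnected s := by
  have hno : ∀ t ⊆ s, IsPreconnected t → ∀ x ∈ t, ∀ y ∈ t, ¬ x < y := by
    intro t hts ht x hx y hy hxy
    have hIoo : Ioo x y ⊆ interior s :=
      interior_maximal (Ioo_subset_Icc_self.trans ((ht.Icc_subset hx hy).trans hts)) isOpen_Ioo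
    exact (nonempty_Ioo.2 hxy).not_subset_empty (hs ▸ hIoo)
  intro t hts ht x hx y hy
  exact (not_lt.1 (hno t hts ht y hy x hx)).antisymm (not_lt.1 (hno t hts ht x hx y hy))

lemma exists_perfect_subset_of_measure_pos [T2Space X] [SecondCountableTopology X]
    [MeasurableSpace X] [OpensMeasurableSpace X] {μ : MeasureTheory.Measure X}
    [μ.InnerRegular] [MeasureTheory.NullSingletonClass μ]
    {s : Set X} (hs : MeasurableSet s) (hμ : 0 < μ s) :
    ∃ K ⊆ s, K.Nonempty ∧ IsCompact K ∧ Preperfect K := by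
  obtain ⟨L, hLs, hL, hμL⟩ := hs.exists_lt_isCompact hμ
  obtain ⟨K, hK, hKne, hKL⟩ := exists_perfect_nonempty_of_isClosed_of_not_countable hL.isClosed
    fun h ↦ hμL.ne' (h.measure_zero μ)
  exact ⟨K, hKL.trans hLs, hKne, hL.of_isClosed_subset hK.closed hKL, hK.acc⟩

end Topology

lemma exists_perfect_subset_Ioo_sdiff_countable {a b : ℝ} (hab : a < b) {D : Set ℝ}
    (hD : D.Countable) :
    ∃ K ⊆ Ioo a b \ D, K.Nonempty ∧ IsCompact K ∧ Preperfect K := by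
  refine exists_perfect_subset_of_measure_pos (μ := MeasureTheory.volume)
    (measurableSet_Ioo.diff hD.measurableSet) ?_
  rw [MeasureTheory.measure_sdiff_null (hD.measure_zero _)]
  exact (MeasureTheory.Measure.measure_Ioo_pos _).2 hab

lemma exists_index_of_pairwise_disjoint {α ι : Type*} [Nonempty ι] {s : ι → Set α}
    (hs : Pairwise (Function.onFun Disjoint s)) : ∃ J : α → ι, ∀ i, ∀ x ∈ s i, J x = i := by
  have h : ∀ x, ∃ i, ∀ j, x ∈ s j → i = j := by
    intro x
    by_cases hx : ∃ i, x ∈ s i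
    · obtain ⟨i, hi⟩ := hx
      exact ⟨i, fun j hj ↦ hs.eq (not_disjoint_iff.2 ⟨x, hi, hj⟩)⟩
    · exact ⟨Classical.arbitrary ι, fun j hj ↦ (hx ⟨j, hj⟩).elim⟩
  choose J hJ using h
  exact ⟨J, fun i x hx ↦ hJ x i hx⟩

section SmoothPerturbation

lemma exists_contDiff_support_eq_norm_iteratedFDeriv_le {E : Type*} [NormedAddCommGroup E]
    [NormedSpace ℝ E] [FiniteDimensional ℝ E] {s : Set E} (hs : IsOpen s)
    (hb : Bornology.IsBounded s) (N : ℕ) {ε : ℝ} (hε : 0 < ε) :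
    ∃ f : E → ℝ, Function.support f = s ∧ ContDiff ℝ (⊤ : ℕ∞) f ∧ (∀ x, 0 ≤ f x) ∧
      ∀ n ≤ N, ∀ x, ‖iteratedFDeriv ℝ n f x‖ ≤ ε := by
  obtain ⟨f, hsupp, hf, hrange⟩ := hs.exists_contDiff_support_eq (n := ⊤)
  have hcompact : HasCompactSupport f := by
    rw [HasCompactSupport, tsupport, hsupp]
    exact hb.isCompact_closure
  have hbound : ∀ n : ℕ, ∃ A, ∀ x, ‖iteratedFDeriv ℝ n f x‖ ≤ A := fun n ↦
    (hcompact.iteratedFDeriv n).exists_bound_of_continuous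
      (hf.continuous_iteratedFDeriv (by exact_mod_cast le_top))
  choose A hA using hbound
  obtain ⟨B, hB⟩ := ((Set.finite_Iic N).image A).bddAbove
  have hc : 0 < ε / max B 1 := by positivity
  refine ⟨(ε / max B 1) • f, ?_, contDiff_const.smul hf, fun x ↦ ?_, fun n hn x ↦ ?_⟩
  · rw [Function.support_const_smul_of_ne_zero _ _ hc.ne', hsupp]
  · exact mul_nonneg hc.le (hrange (mem_range_self x)).1
  · rw [iteratedFDeriv_const_smul_apply (hf.contDiffAt.of_le (by exact_mod_cast le_top)),
      norm_smul, Real.norm_of_nonneg hc.le]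
    calc ε / max B 1 * ‖iteratedFDeriv ℝ n f x‖ ≤ ε / max B 1 * max B 1 := by
          gcongr
          exact (hA n x).trans ((hB (mem_image_of_mem A hn)).trans (le_max_left B 1))
      _ = ε := by field_simp

lemma exists_orderIso_add_of_neg_one_lt_deriv {n : WithTop ℕ∞} {F : ℝ → ℝ} (hF : ContDiff ℝ n F)
    (hn : n ≠ 0) (hderiv : ∀ x, -1 < deriv F x) {C : ℝ} (hC : ∀ x, |F x| ≤ C) :
    ∃ e : ℝ ≃o ℝ, (∀ x, e x = x + F x) ∧ ContDiff ℝ n e ∧ ContDiff ℝ n e.symm := by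
  have hd : ∀ x, HasDerivAt (fun y ↦ y + F y) (1 + deriv F x) x := fun x ↦
    (hasDerivAt_id x).add (hF.differentiable hn x).hasDerivAt
  have hpos : ∀ x, 0 < 1 + deriv F x := fun x ↦ by linarith [hderiv x]
  have hmono : StrictMono fun y ↦ y + F y :=
    strictMono_of_deriv_pos fun x ↦ by rw [(hd x).deriv]; exact hpos x
  have hcont : ContDiff ℝ n fun y ↦ y + F y := contDiff_id.add hF
  have hsurj : Function.Surjective fun y ↦ y + F y :=
    hcont.continuous.surjective
      (tendsto_atTop_add_right_of_le _ (-C) tendsto_id fun x ↦ (abs_le.1 (hC x)).1)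
      (tendsto_atBot_add_right_of_ge _ C tendsto_id fun x ↦ (abs_le.1 (hC x)).2)
  let e := hmono.orderIsoOfSurjective _ hsurj
  exact ⟨e, fun x ↦ rfl, hcont,
    e.toHomeomorph.contDiff_symm_deriv (fun x ↦ (hpos x).ne') hd hcont⟩

lemma exists_orderIso_add_tsum {u : ℕ → ℝ → ℝ} {v : ℕ → ℝ} {V : ℝ}
    (hu : ∀ j, ContDiff ℝ (⊤ : ℕ∞) (u j)) (hv : HasSum v V) (hV : V < 1)
    (huv : ∀ j, ∀ n ≤ j + 1, ∀ x, ‖iteratedFDeriv ℝ n (u j) x‖ ≤ v j) :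
    ∃ e : ℝ ≃o ℝ, (∀ x, e x = x + ∑' j, u j x) ∧ ContDiff ℝ (⊤ : ℕ∞) e ∧
      ContDiff ℝ (⊤ : ℕ∞) e.symm := by
  have hbound : ∀ j x, ‖u j x‖ ≤ v j := fun j x ↦ by
    simpa only [norm_iteratedFDeriv_zero] using huv j 0 (Nat.zero_le _) x
  have hbound' : ∀ j x, ‖deriv (u j) x‖ ≤ v j := fun j x ↦ by
    simpa only [norm_iteratedFDeriv_eq_norm_iteratedDeriv, iteratedDeriv_one] using
      huv j 1 (Nat.le_add_left 1 j) x
  have hsmooth : ContDiff ℝ (⊤ : ℕ∞) fun x ↦ ∑' j, u j x := by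
    refine contDiff_tsum_of_eventually (v := fun _ ↦ v) hu (fun _ _ ↦ hv.summable) fun k _ ↦ ?_
    rw [Nat.cofinite_eq_atTop]
    filter_upwards [eventually_ge_atTop k] with j hj x
    exact huv j k (by omega) x
  have hderiv : ∀ x, HasDerivAt (fun y ↦ ∑' j, u j y) (∑' j, deriv (u j) x) x :=
    hasDerivAt_tsum hv.summable
      (fun j x ↦ ((hu j).differentiable (by simp) x).hasDerivAt) hbound'
      (Summable.of_norm_bounded hv.summable fun j ↦ hbound j 0)
  refine exists_orderIso_add_of_neg_one_lt_deriv hsmooth (by simp) (fun x ↦ ?_)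
    fun x ↦ tsum_of_norm_bounded hv fun j ↦ hbound j x
  rw [(hderiv x).deriv]
  have hV' : |∑' j, deriv (u j) x| ≤ V := tsum_of_norm_bounded hv fun j ↦ hbound' j x
  linarith [(abs_le.1 hV').1]

end SmoothPerturbation

section IntervalDynamics

lemma zpow_apply_eq_self {α : Type*} [LE α] {g : α ≃o α} {x : α} (hx : g x = x) (k : ℤ) :
    (g ^ k) x = x :=
  MulAction.mem_fixedBy_zpow (show x ∈ MulAction.fixedBy α g from hx) k

lemma zpow_apply_mem_Ioo {α : Type*} [Preorder α] {g : α ≃o α} {a b x : α} (ha : g a = a)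
    (hb : g b = b) (hx : x ∈ Ioo a b) (k : ℤ) : (g ^ k) x ∈ Ioo a b := by
  rw [← zpow_apply_eq_self ha k, ← zpow_apply_eq_self hb k]
  exact ⟨(g ^ k).strictMono hx.1, (g ^ k).strictMono hx.2⟩

lemma strictMono_zpow_apply {α : Type*} [Preorder α] {g : α ≃o α} {a b x : α} (ha : g a = a)
    (hb : g b = b) (hg : ∀ y ∈ Ioo a b, y < g y) (hx : x ∈ Ioo a b) :
    StrictMono fun k : ℤ ↦ (g ^ k) x := by
  refine strictMono_int_of_lt_succ fun k ↦ ?_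
  rw [add_comm, zpow_one_add]
  exact hg _ (zpow_apply_mem_Ioo ha hb hx k)

variable {α : Type*} [ConditionallyCompleteLinearOrder α] [TopologicalSpace α] [OrderTopology α]
  {g : α ≃o α} {a b : α}

lemma tendsto_pow_apply_atTop (ha : g a = a) (hb : g b = b) (hg : ∀ y ∈ Ioo a b, y < g y)
    {x : α} (hx : x ∈ Ioo a b) : Tendsto (fun n : ℕ ↦ (g ^ n) x) atTop (𝓝 b) := by
  have hmem : ∀ n : ℕ, (g ^ n) x ∈ Ioo a b := fun n ↦ by
    simpa only [zpow_natCast] using zpow_apply_mem_Ioo ha hb hx n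
  have hmono : Monotone fun n : ℕ ↦ (g ^ n) x := monotone_nat_of_le_succ fun n ↦ by
    rw [pow_succ']
    exact (hg _ (hmem n)).le
  have hbdd : BddAbove (range fun n : ℕ ↦ (g ^ n) x) :=
    ⟨b, forall_mem_range.2 fun n ↦ (hmem n).2.le⟩
  have hlim := tendsto_atTop_ciSup hmono hbdd
  set L := ⨆ n : ℕ, (g ^ n) x
  have hfix : g L = L := by
    refine tendsto_nhds_unique (f := fun n : ℕ ↦ (g ^ (n + 1)) x) ?_
      (hlim.comp (tendsto_add_atTop_nat 1))
    simp only [pow_succ']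
    exact (g.continuous.tendsto L).comp hlim
  have haL : a < L := hx.1.trans_le (le_ciSup hbdd 0)
  have hLb : L = b := (ciSup_le fun n ↦ (hmem n).2.le).eq_of_not_lt fun hLb ↦
    (hg L ⟨haL, hLb⟩).ne' hfix
  rwa [← hLb]

lemma finite_zpow_image_Icc_inter_Icc (ha : g a = a) (hb : g b = b)
    (hg : ∀ y ∈ Ioo a b, y < g y) {p q u v : α} (hp : p ∈ Ioo a b) (hq : q < b) (hu : u ∈ Ioo a b)
    (hv : v < b) : {k : ℤ | ((g ^ k) '' Icc p q ∩ Icc u v).Nonempty}.Finite := by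
  obtain ⟨N, hN⟩ := ((tendsto_pow_apply_atTop ha hb hg hp).eventually_const_lt hv).exists
  obtain ⟨M, hM⟩ := ((tendsto_pow_apply_atTop ha hb hg hu).eventually_const_lt hq).exists
  refine (finite_Icc (-(M : ℤ)) N).subset ?_
  rintro k ⟨_, ⟨y, hy, rfl⟩, huy, hyv⟩
  have hy' : y ∈ Ioo a b := ⟨hp.1.trans_le hy.1, hy.2.trans_lt hq⟩
  constructor
  · by_contra! hk
    have hlt : (g ^ (M + k)) y < y := by
      simpa using strictMono_zpow_apply ha hb hg hy' (show M + k < 0 by omega)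
    have hle : (g ^ M) u ≤ (g ^ (M + k)) y := by
      rw [zpow_add, zpow_natCast]
      exact (g ^ M).monotone huy
    exact (hM.trans_le hle).not_gt (hlt.trans_le hy.2)
  · by_contra! hk
    have hlt : (g ^ N) p < (g ^ k) p := by
      simpa using strictMono_zpow_apply ha hb hg hp hk
    exact (hN.trans hlt).not_ge (((g ^ k).monotone hy.1).trans hyv)

lemma finite_zpow_image_inter_Icc (ha : g a = a) (hb : g b = b)
    (hg : ∀ y ∈ Ioo a b, y < g y) {K : Set α} (hK : IsCompact K) (hKab : K ⊆ Ioo a b) {u v : α}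
    (hu : u ∈ Ioo a b) (hv : v < b) : {k : ℤ | ((g ^ k) '' K ∩ Icc u v).Nonempty}.Finite := by
  rcases K.eq_empty_or_nonempty with rfl | hne
  · simp
  · obtain ⟨p, hpK, hp⟩ := hK.exists_isLeast hne
    obtain ⟨q, hqK, hq⟩ := hK.exists_isGreatest hne
    refine (finite_zpow_image_Icc_inter_Icc ha hb hg (hKab hpK) (hKab hqK).2 hu hv).subset
      fun k hk ↦ hk.mono ?_
    gcongr
    exact fun y hy ↦ ⟨hp hy, hq hy⟩

end IntervalDynamics

section IndexedZPow

variable {α ι : Type*} [LE α] {g : α ≃o α} {J : α → ι}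

/-- The map applying to each point `x` the power of `g` prescribed by the exponent sequence `m` at
the index `J x`. When `J` tells apart the components of the support of `g` and `g_j` is the part of
`g` on the `j`-th one, this is the infinite composition `Θ(m) = g₁^{m₁} ∘ g₂^{m₂} ∘ ⋯`. -/
def indexedZPow (g : α ≃o α) (J : α → ι) (m : ι → ℤ) (x : α) : α := (g ^ m (J x)) x

lemma index_zpow_apply (hJ : ∀ x, J (g x) = J x) (k : ℤ) (x : α) : J ((g ^ k) x) = J x := by
  induction k using Int.induction_on with
  | zero => simp
  | succ n ih => rw [add_comm, zpow_one_add, RelIso.mul_apply, hJ, ih]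
  | pred n ih =>
    rw [← ih, ← hJ ((g ^ (-(n : ℤ) - 1)) x), ← RelIso.mul_apply, ← zpow_one_add,
      add_sub_cancel]

lemma indexedZPow_zero : indexedZPow g J 0 = id := by
  funext x
  simp [indexedZPow]

lemma indexedZPow_add (hJ : ∀ x, J (g x) = J x) (m m' : ι → ℤ) :
    indexedZPow g J (m + m') = indexedZPow g J m ∘ indexedZPow g J m' := by
  funext x
  simp only [indexedZPow, Function.comp_apply, Pi.add_apply, index_zpow_apply hJ, zpow_add,
    RelIso.mul_apply]

lemma leftInverse_indexedZPow_neg (hJ : ∀ x, J (g x) = J x) (m : ι → ℤ) :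
    Function.LeftInverse (indexedZPow g J (-m)) (indexedZPow g J m) := by
  rw [Function.leftInverse_iff_comp, ← indexedZPow_add hJ, neg_add_cancel, indexedZPow_zero]

lemma rightInverse_indexedZPow_neg (hJ : ∀ x, J (g x) = J x) (m : ι → ℤ) :
    Function.RightInverse (indexedZPow g J (-m)) (indexedZPow g J m) := by
  have h := leftInverse_indexedZPow_neg hJ (-m)
  rwa [neg_neg] at h

end IndexedZPow

lemma IsSmoothDiffeoPair.symm {φ ψ : ℝ → ℝ} (h : IsSmoothDiffeoPair φ ψ) :
    IsSmoothDiffeoPair ψ φ :=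
  ⟨h.2.1, h.1, h.2.2.2, h.2.2.1⟩

lemma IsSmoothDiffeoPair.comp {φ ψ φ' ψ' : ℝ → ℝ} (h : IsSmoothDiffeoPair φ ψ)
    (h' : IsSmoothDiffeoPair φ' ψ') : IsSmoothDiffeoPair (φ ∘ φ') (ψ' ∘ ψ) :=
  ⟨h.1.comp h'.1, h'.2.1.comp h.2.1, h.2.2.1.comp h'.2.2.1, h.2.2.2.comp h'.2.2.2⟩

lemma IsSmoothDiffeoPair.image_closure {φ ψ : ℝ → ℝ} (h : IsSmoothDiffeoPair φ ψ) {s : Set ℝ}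
    (hφ : MapsTo φ s s) (hψ : MapsTo ψ s s) : φ '' closure s = closure s :=
  (InvOn.bijOn ⟨h.2.2.1.leftInvOn _, h.2.2.2.rightInvOn _⟩ (hφ.closure h.1.continuous)
    (hψ.closure h.2.1.continuous)).image_eq

lemma boundedSeq_indicator_one (S : Set ℕ) : BoundedSeq (S.indicator 1) := by
  refine ⟨1, fun i ↦ ?_⟩
  by_cases h : i ∈ S <;> simp [h]

lemma natCast_mem_closure_range_indicator_one {ι : Type*} (N : ℕ) {m : ι → ℕ} (hm : ∀ i, m i ≤ N) :
    (fun i ↦ (m i : ℤ)) ∈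
      AddSubgroup.closure (range fun S : Set ι ↦ (S.indicator 1 : ι → ℤ)) := by
  induction N generalizing m with
  | zero =>
    simp only [nonpos_iff_eq_zero] at hm
    simpa only [hm, Nat.cast_zero] using! zero_mem _
  | succ N ih =>
    have hsplit : (fun i ↦ (m i : ℤ)) =
        {i | m i ≠ 0}.indicator 1 + fun i ↦ ((m i - 1 : ℕ) : ℤ) := by
      funext i
      by_cases h : m i = 0
      · simp [h]
      · simp [h, Nat.cast_pred (Nat.pos_of_ne_zero h)]
    rw [hsplit]
    exact add_mem (AddSubgroup.subset_closure (mem_range_self _))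
      (ih fun i ↦ by have := hm i; omega)

lemma BoundedSeq.mem_closure_range_indicator_one {m : ℕ → ℤ} (hm : BoundedSeq m) :
    m ∈ AddSubgroup.closure (range fun S : Set ℕ ↦ (S.indicator 1 : ℕ → ℤ)) := by
  obtain ⟨B, hB⟩ := hm
  have hsplit : m = (fun i ↦ ((m i).toNat : ℤ)) - fun i ↦ ((-m i).toNat : ℤ) :=
    funext fun i ↦ (Int.toNat_sub_toNat_neg (m i)).symm
  rw [hsplit]
  refine sub_mem (natCast_mem_closure_range_indicator_one B.toNat fun i ↦ ?_)
    (natCast_mem_closure_range_indicator_one B.toNat fun i ↦ ?_)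
  · exact Int.toNat_le_toNat ((le_abs_self _).trans (hB i))
  · exact Int.toNat_le_toNat ((neg_le_abs _).trans (hB i))

lemma not_countable_restrictions {C : Set ℝ} {Θ : (ℕ → ℤ) → ℝ → ℝ}
    (hΘ : ∀ m, BoundedSeq m → ∃ φ ψ : ℝ → ℝ, IsSmoothDiffeoPair φ ψ ∧ φ '' C = C ∧
      EqOn (Θ m) φ C)
    (hinj : ∀ m m', BoundedSeq m → BoundedSeq m' → EqOn (Θ m) (Θ m') C → m = m') :
    ¬ Set.Countable {f : C → ℝ | ∃ φ ψ : ℝ → ℝ, IsSmoothDiffeoPair φ ψ ∧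
      φ '' C = C ∧ ∀ x : C, f x = φ x} := by
  intro hcount
  let r : Set ℕ → C → ℝ := fun S ↦ C.domRestrict (Θ (S.indicator 1))
  have hr : Function.Injective r := fun S T hST ↦ indicator_one_inj ℤ
    (hinj _ _ (boundedSeq_indicator_one S) (boundedSeq_indicator_one T)
      (domRestrict_eq_domRestrict_iff.1 hST))
  have hrange : range r ⊆ {f : C → ℝ | ∃ φ ψ : ℝ → ℝ, IsSmoothDiffeoPair φ ψ ∧
      φ '' C = C ∧ ∀ x : C, f x = φ x} := by
    rintro _ ⟨S, rfl⟩
    obtain ⟨φ, ψ, hφψ, hC, heq⟩ := hΘ _ (boundedSeq_indicator_one S)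
    exact ⟨φ, ψ, hφψ, hC, fun x ↦ heq x.2⟩
  have : Countable (range r) := (hcount.mono hrange).to_subtype
  obtain ⟨e, he⟩ := (rangeFactorization_injective.2 hr).countable.exists_injective_nat
  exact Function.cantor_injective e he

section Switchable

lemma exists_orderIso_add_indicator {f : ℕ → ℝ → ℝ} {J : ℝ → ℕ} {v : ℕ → ℝ} {V : ℝ}
    (hf : ∀ j, ContDiff ℝ (⊤ : ℕ∞) (f j)) (hv : HasSum v V) (hV : V < 1)
    (hfv : ∀ j, ∀ n ≤ j + 1, ∀ x, ‖iteratedFDeriv ℝ n (f j) x‖ ≤ v j)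
    (hJ : ∀ j x, f j x ≠ 0 → J x = j) (S : Set ℕ) :
    ∃ e : ℝ ≃o ℝ, (∀ x, e x = x + S.indicator (fun j ↦ f j x) (J x)) ∧
      ContDiff ℝ (⊤ : ℕ∞) e ∧ ContDiff ℝ (⊤ : ℕ∞) e.symm := by
  have hsmooth : ∀ j, ContDiff ℝ (⊤ : ℕ∞) (S.indicator f j) := fun j ↦ by
    by_cases hj : j ∈ S
    · simpa only [indicator_of_mem hj] using hf j
    · rw [indicator_of_notMem hj]
      exact contDiff_zero_fun
  have hbound : ∀ j, ∀ n ≤ j + 1, ∀ x, ‖iteratedFDeriv ℝ n (S.indicator f j) x‖ ≤ v j := by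
    intro j n hn x
    by_cases hj : j ∈ S
    · simpa only [indicator_of_mem hj] using hfv j n hn x
    · have hzero : iteratedFDeriv ℝ n (0 : ℝ → ℝ) x = 0 := congrFun iteratedFDeriv_fun_zero x
      rw [indicator_of_notMem hj, hzero, norm_zero]
      exact (norm_nonneg _).trans (hfv j n hn x)
  obtain ⟨e, he, hesmooth⟩ := exists_orderIso_add_tsum hsmooth hv hV hbound
  refine ⟨e, fun x ↦ ?_, hesmooth⟩
  rw [he, tsum_eq_single (J x) fun j hj ↦ ?_]
  · by_cases hJx : J x ∈ S <;> simp [hJx]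
  · have hzero : f j x = 0 := by_contra fun h ↦ hj (hJ j x h).symm
    by_cases hjS : j ∈ S <;> simp [hjS, hzero]

/-- The diffeomorphism `g` moves every point of the intervals `(a (j + 1), a j)` to the right, fixes
their endpoints, and stays smooth when its restrictions to an arbitrary set of these intervals are
replaced by the identity. The function `J` returns the index of the interval containing a point (and
is constant along the orbits of `g` everywhere). -/
structure IsSwitchable (a : ℕ → ℝ) (g : ℝ ≃o ℝ) (J : ℝ → ℕ) : Prop where
  map_endpoint : ∀ j, g (a j) = a j
  lt_map : ∀ j, ∀ x ∈ Ioo (a (j + 1)) (a j), x < g x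
  index_eq : ∀ j, ∀ x ∈ Ioo (a (j + 1)) (a j), J x = j
  index_map : ∀ x, J (g x) = J x
  isSmoothDiffeoPair_indicator : ∀ S : Set ℕ,
    IsSmoothDiffeoPair (indexedZPow g J (S.indicator 1)) (indexedZPow g J (-S.indicator 1))

lemma exists_isSwitchable_of_bumps {a : ℕ → ℝ} (ha : StrictAnti a) {f : ℕ → ℝ → ℝ} {J : ℝ → ℕ}
    {v : ℕ → ℝ} {V : ℝ} (hsupp : ∀ j, Function.support (f j) = Ioo (a (j + 1)) (a j))
    (hf : ∀ j, ContDiff ℝ (⊤ : ℕ∞) (f j)) (hnonneg : ∀ j x, 0 ≤ f j x)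
    (hv : HasSum v V) (hV : V < 1)
    (hfv : ∀ j, ∀ n ≤ j + 1, ∀ x, ‖iteratedFDeriv ℝ n (f j) x‖ ≤ v j)
    (hJ : ∀ j, ∀ x ∈ Ioo (a (j + 1)) (a j), J x = j) :
    ∃ g : ℝ ≃o ℝ, IsSwitchable a g J := by
  have hne : ∀ j x, f j x ≠ 0 ↔ x ∈ Ioo (a (j + 1)) (a j) := fun j x ↦ by
    rw [← hsupp, Function.mem_support]
  choose G hG hGsmooth hGsymm using
    exists_orderIso_add_indicator hf hv hV hfv fun j x hx ↦ hJ j x ((hne j x).1 hx)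
  have hg : ∀ x, G univ x = x + f (J x) x := fun x ↦ by rw [hG, indicator_univ]
  have hendpoint : ∀ j, G univ (a j) = a j := fun j ↦ by
    have hzero : f (J (a j)) (a j) = 0 := by
      by_contra h
      obtain ⟨hlt, hgt⟩ := (hne _ _).1 h
      have hlt' := ha.lt_iff_gt.1 hlt
      have hgt' := ha.lt_iff_gt.1 hgt
      omega
    rw [hg, hzero, add_zero]
  have hindicator : ∀ S : Set ℕ, indexedZPow (G univ) J (S.indicator 1) = G S := fun S ↦ by
    funext x
    by_cases hx : J x ∈ S <;> simp [indexedZPow, hG, hx]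
  have hindex : ∀ x, J (G univ x) = J x := fun x ↦ by
    by_cases hx : f (J x) x = 0
    · rw [hg, hx, add_zero]
    · refine hJ _ _ ?_
      simpa only [zpow_one] using
        zpow_apply_mem_Ioo (hendpoint _) (hendpoint _) ((hne _ _).1 hx) 1
  refine ⟨G univ, hendpoint, fun j x hx ↦ ?_, hJ, hindex, fun S ↦ ?_⟩
  · have hpos : 0 < f j x := (hnonneg j x).lt_of_ne' ((hne j x).2 hx)
    rw [hg, hJ j x hx]
    exact lt_add_of_pos_right x hpos
  · have hleft := leftInverse_indexedZPow_neg hindex (S.indicator 1)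
    have hright := rightInverse_indexedZPow_neg hindex (S.indicator 1)
    rw [hindicator] at hleft hright ⊢
    have hsymm := hleft.eq_rightInverse (G S).right_inv
    exact ⟨hGsmooth S, hsymm ▸ hGsymm S, hleft, hright⟩

lemma exists_isSwitchable {a : ℕ → ℝ} (ha : StrictAnti a) :
    ∃ (g : ℝ ≃o ℝ) (J : ℝ → ℕ), IsSwitchable a g J := by
  have hε : ∀ j : ℕ, 0 < (1 / 2 : ℝ) ^ j / 4 := fun j ↦ by positivity
  choose f hsupp hf hnonneg hbound using fun j ↦
    exists_contDiff_support_eq_norm_iteratedFDeriv_le (isOpen_Ioo (a := a (j + 1)) (b := a j))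
      (Metric.isBounded_Ioo _ _) (j + 1) (hε j)
  obtain ⟨J, hJ⟩ := exists_index_of_pairwise_disjoint ha.antitone.pairwise_disjoint_on_Ioo_succ
  obtain ⟨g, hg⟩ := exists_isSwitchable_of_bumps ha hsupp hf hnonneg
    (hasSum_geometric_two.div_const 4) (by norm_num) hbound hJ
  exact ⟨g, J, hg⟩

namespace IsSwitchable

variable {a : ℕ → ℝ} {g : ℝ ≃o ℝ} {J : ℝ → ℕ}

lemma isSmoothDiffeoPair (h : IsSwitchable a g J) {m : ℕ → ℤ} (hm : BoundedSeq m) :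
    IsSmoothDiffeoPair (indexedZPow g J m) (indexedZPow g J (-m)) := by
  have hmem := hm.mem_closure_range_indicator_one
  clear hm
  induction hmem using AddSubgroup.closure_induction with
  | mem _ hmem =>
    obtain ⟨S, rfl⟩ := hmem
    exact h.isSmoothDiffeoPair_indicator S
  | zero =>
    rw [neg_zero, indexedZPow_zero]
    exact ⟨contDiff_id, contDiff_id, fun _ ↦ rfl, fun _ ↦ rfl⟩
  | add m m' _ _ hm hm' =>
    rw [neg_add_rev, indexedZPow_add h.index_map, indexedZPow_add h.index_map]
    exact hm.comp hm'
  | neg m _ hm =>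
    rw [neg_neg]
    exact hm.symm

lemma eq_of_eqOn (h : IsSwitchable a g J) {s : Set ℝ}
    (hs : ∀ j, (s ∩ Ioo (a (j + 1)) (a j)).Nonempty) {m m' : ℕ → ℤ}
    (hm : EqOn (indexedZPow g J m) (indexedZPow g J m') s) : m = m' := by
  funext j
  obtain ⟨x, hxs, hx⟩ := hs j
  refine (strictMono_zpow_apply (h.map_endpoint _) (h.map_endpoint _) (h.lt_map j)
    hx).injective ?_
  simpa only [indexedZPow, h.index_eq j x hx] using hm hxs

end IsSwitchable

end Switchable

lemma isCantorSet_closure {s : Set ℝ} (hne : s.Nonempty) (hb : Bornology.IsBounded s)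
    (hp : Preperfect s) (hs : IsNowhereDense s) : IsCantorSet (closure s) :=
  ⟨hne.closure, hb.isCompact_closure, hp.perfect_closure,
    isTotallyDisconnected_of_interior_eq_empty hs⟩

section OrbitUnion

variable {α ι : Type*} [LE α] {g : α ≃o α} {K : ι → Set α}

/-- The union of the orbits under `g` of the points of the sets `K i`. -/
def orbitUnion (g : α ≃o α) (K : ι → Set α) : Set α := ⋃ p : ι × ℤ, (g ^ p.2) '' K p.1

lemma mem_orbitUnion {x : α} : x ∈ orbitUnion g K ↔ ∃ i, ∃ k : ℤ, ∃ y ∈ K i, (g ^ k) y = x := by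
  simp only [orbitUnion, mem_iUnion, Prod.exists, mem_image]

lemma subset_orbitUnion (i : ι) : K i ⊆ orbitUnion g K := fun x hx ↦
  mem_orbitUnion.2 ⟨i, 0, x, hx, by simp⟩

lemma mapsTo_indexedZPow_orbitUnion {κ : Type*} (J : α → κ) (m : κ → ℤ) :
    MapsTo (indexedZPow g J m) (orbitUnion g K) (orbitUnion g K) := by
  intro x hx
  obtain ⟨i, k, y, hy, rfl⟩ := mem_orbitUnion.1 hx
  exact mem_orbitUnion.2 ⟨i, m (J ((g ^ k) y)) + k, y, hy, by rw [zpow_add]; rfl⟩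

lemma countable_setOf_exists_zpow_apply_mem {D : Set α} (hD : D.Countable) :
    {x | ∃ k : ℤ, (g ^ k) x ∈ D}.Countable := by
  rw [ofPred_exists]
  exact countable_iUnion fun k ↦ hD.preimage (g ^ k).injective

lemma disjoint_orbitUnion {D : Set α} (hK : ∀ i, Disjoint (K i) {x | ∃ k : ℤ, (g ^ k) x ∈ D}) :
    Disjoint (orbitUnion g K) D := by
  rw [disjoint_left]
  rintro x hx hxD
  obtain ⟨i, k, y, hy, rfl⟩ := mem_orbitUnion.1 hx
  exact disjoint_left.1 (hK i) hy ⟨k, hxD⟩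

lemma preperfect_orbitUnion {α ι : Type*} [PartialOrder α] [TopologicalSpace α] [OrderTopology α]
    {g : α ≃o α} {K : ι → Set α} (hK : ∀ i, Preperfect (K i)) : Preperfect (orbitUnion g K) :=
  preperfect_iUnion fun p ↦ preperfect_image_homeomorph (g ^ p.2).toHomeomorph (hK p.1)

end OrbitUnion

namespace IsSwitchable

variable {a : ℕ → ℝ} {g : ℝ ≃o ℝ} {J : ℝ → ℕ} {K : ℕ → Set ℝ}

lemma zpow_image_subset_Ioo (h : IsSwitchable a g J) (hK : ∀ j, K j ⊆ Ioo (a (j + 1)) (a j))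
    (j : ℕ) (k : ℤ) : (g ^ k) '' K j ⊆ Ioo (a (j + 1)) (a j) :=
  image_subset_iff.2 fun _ hx ↦
    zpow_apply_mem_Ioo (h.map_endpoint _) (h.map_endpoint _) (hK j hx) k

lemma isLocallyClosed_orbitUnion (h : IsSwitchable a g J) (hKc : ∀ j, IsCompact (K j))
    (hK : ∀ j, K j ⊆ Ioo (a (j + 1)) (a j)) : IsLocallyClosed (orbitUnion g K) := by
  have hKIoo := h.zpow_image_subset_Ioo hK
  refine isLocallyClosed_iUnion_of_finite_nhds (U := ⋃ j, Ioo (a (j + 1)) (a j))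
    (isOpen_iUnion fun _ ↦ isOpen_Ioo) (fun p ↦ subset_iUnion_of_subset p.1 (hKIoo p.1 p.2))
    (fun p ↦ ((hKc p.1).image (g ^ p.2).continuous).isClosed) fun x hx ↦ ?_
  obtain ⟨j, hj⟩ := mem_iUnion.1 hx
  obtain ⟨u, hau, hux⟩ := exists_between hj.1
  obtain ⟨v, hxv, hva⟩ := exists_between hj.2
  refine ⟨Icc u v, Icc_mem_nhds hux hxv, ?_⟩
  refine ((finite_zpow_image_inter_Icc (h.map_endpoint (j + 1)) (h.map_endpoint j) (h.lt_map j)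
    (hKc j) (hK j) ⟨hau, hux.trans hj.2⟩ hva).image (Prod.mk j)).subset ?_
  rintro ⟨i, k⟩ ⟨y, hyK, hy⟩
  have hij : i = j := by
    rw [← h.index_eq i y (hKIoo i k hyK), h.index_eq j y ⟨hau.trans_le hy.1, hy.2.trans_lt hva⟩]
  subst hij
  exact ⟨k, ⟨y, hyK, hy⟩, rfl⟩

lemma orbitUnion_subset_Icc (h : IsSwitchable a g J) (hK : ∀ j, K j ⊆ Ioo (a (j + 1)) (a j))
    {b c : ℝ} (hbc : ∀ j, a j ∈ Icc b c) : orbitUnion g K ⊆ Icc b c :=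
  iUnion_subset fun p ↦ (h.zpow_image_subset_Ioo hK p.1 p.2).trans
    (Ioo_subset_Icc_self.trans (Icc_subset_Icc (hbc _).1 (hbc _).2))

lemma exists_isCantorSet_closure_orbitUnion (h : IsSwitchable a g J) (ha : StrictAnti a)
    {b c : ℝ} (hbc : ∀ j, a j ∈ Icc b c) :
    ∃ K : ℕ → Set ℝ, (∀ j, K j ⊆ Ioo (a (j + 1)) (a j)) ∧ (∀ j, (K j).Nonempty) ∧
      IsCantorSet (closure (orbitUnion g K)) := by
  have hcount : {x | ∃ k : ℤ, (g ^ k) x ∈ range ((↑) : ℚ → ℝ)}.Countable :=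
    countable_setOf_exists_zpow_apply_mem (countable_range _)
  choose K hKsub hKne hKc hKp using fun j : ℕ ↦
    exists_perfect_subset_Ioo_sdiff_countable (ha j.lt_succ_self) hcount
  have hK : ∀ j, K j ⊆ Ioo (a (j + 1)) (a j) := fun j ↦ (subset_sdiff.1 (hKsub j)).1
  have hirrational : Disjoint (orbitUnion g K) (range ((↑) : ℚ → ℝ)) :=
    disjoint_orbitUnion fun j ↦ (subset_sdiff.1 (hKsub j)).2
  have hdense : Dense (orbitUnion g K)ᶜ :=
    Rat.denseRange_cast.mono hirrational.subset_compl_left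
  refine ⟨K, hK, hKne, isCantorSet_closure ((hKne 0).mono (subset_orbitUnion 0))
    ((Metric.isBounded_Icc b c).subset (h.orbitUnion_subset_Icc hK hbc))
    (preperfect_orbitUnion hKp)
    (isNowhereDense_of_isLocallyClosed (h.isLocallyClosed_orbitUnion hKc hK) hdense)⟩

end IsSwitchable

/-- There is a (non-sparse) Cantor set `C ⊂ [0,1]` whose group of transformations
induced by `C^∞` diffeomorphisms of ℝ preserving `C` is uncountable; explicitly, the
group of bounded integer sequences under termwise addition embeds into it. -/
theorem exists_cantor_uncountable_smooth_diffeo_group :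
    ∃ C : Set ℝ, C ⊆ Set.Icc 0 1 ∧ IsCantorSet C ∧
      ¬ Set.Countable {f : C → ℝ | ∃ φ ψ : ℝ → ℝ, IsSmoothDiffeoPair φ ψ ∧
          φ '' C = C ∧ ∀ x : C, f x = φ x} ∧
      ∃ Θ : (ℕ → ℤ) → (ℝ → ℝ),
        (∀ m, BoundedSeq m → ∃ φ ψ : ℝ → ℝ, IsSmoothDiffeoPair φ ψ ∧ φ '' C = C ∧
          Set.EqOn (Θ m) φ C) ∧
        (∀ m m', BoundedSeq m → BoundedSeq m' →
          Set.EqOn (Θ (m + m')) (Θ m ∘ Θ m') C) ∧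
        (∀ m m', BoundedSeq m → BoundedSeq m' →
          Set.EqOn (Θ m) (Θ m') C → m = m') := by
  have ha : StrictAnti fun j : ℕ ↦ (1 / 2 : ℝ) ^ j :=
    pow_right_strictAnti₀ (by norm_num) (by norm_num)
  have ha01 : ∀ j : ℕ, (1 / 2 : ℝ) ^ j ∈ Icc 0 1 := fun j ↦
    ⟨by positivity, pow_le_one₀ (by norm_num) (by norm_num)⟩
  obtain ⟨g, J, hg⟩ := exists_isSwitchable ha
  obtain ⟨K, hK, hKne, hcantor⟩ := hg.exists_isCantorSet_closure_orbitUnion ha ha01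
  have hdiffeo : ∀ m, BoundedSeq m → ∃ φ ψ : ℝ → ℝ, IsSmoothDiffeoPair φ ψ ∧
      φ '' closure (orbitUnion g K) = closure (orbitUnion g K) ∧
      EqOn (indexedZPow g J m) φ (closure (orbitUnion g K)) := fun m hm ↦
    ⟨_, _, hg.isSmoothDiffeoPair hm, (hg.isSmoothDiffeoPair hm).image_closure
      (mapsTo_indexedZPow_orbitUnion J m) (mapsTo_indexedZPow_orbitUnion J (-m)), eqOn_refl _ _⟩
  have hmeets : ∀ j : ℕ, (closure (orbitUnion g K) ∩
      Ioo ((1 / 2 : ℝ) ^ (j + 1)) ((1 / 2) ^ j)).Nonempty := fun j ↦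
    (hKne j).mono (subset_inter ((subset_orbitUnion j).trans subset_closure) (hK j))
  have hinj : ∀ m m', BoundedSeq m → BoundedSeq m' →
      EqOn (indexedZPow g J m) (indexedZPow g J m') (closure (orbitUnion g K)) → m = m' :=
    fun m m' _ _ ↦ hg.eq_of_eqOn hmeets
  exact ⟨closure (orbitUnion g K),
    closure_minimal (hg.orbitUnion_subset_Icc hK ha01) isClosed_Icc, hcantor,
    not_countable_restrictions hdiffeo hinj, indexedZPow g J, hdiffeo,
    fun m m' _ _ ↦ (indexedZPow_add hg.index_map m m').symm ▸ eqOn_refl _ _, hinj⟩
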